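/- Let C be a strong divisibility sequence, let p be an ideal prime for C, and fix 0 ≤ r < α(p). Then the sequence (a_n)_{n≥0} defined by a_n = T_{p,C}(α(p)·n + r, x), viewed as a sequence with entries in the field ℚ(x) of rational functions, is p-regular: the ℚ(x)-vector subspace of the space of all sequences ℕ → ℚ(x) spanned by the set of subsequences { (a_{p^e·n + i})_{n≥0} : e ≥ 0, 0 ≤ i ≤ p^e − 1 } is finite-dimensional. -/

import Mathlib

open Finset

/-- A strong divisibility sequence: nonzero integers `Cs 1, Cs 2, ...` with
`gcd (Cs n) (Cs m) = |Cs (gcd n m)|`. -/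
def IsStrongDivSeq (Cs : ℕ → ℤ) : Prop :=
  (∀ n, 1 ≤ n → Cs n ≠ 0) ∧
  ∀ m n, 1 ≤ m → 1 ≤ n → Int.gcd (Cs n) (Cs m) = (Cs (Nat.gcd n m)).natAbs

/-- `a` is the rank of apparition of `m` in the sequence `Cs`:
the least index `j ≥ 1` such that `m ∣ Cs j`. -/
def IsRank (Cs : ℕ → ℤ) (m a : ℕ) : Prop :=
  1 ≤ a ∧ (m : ℤ) ∣ Cs a ∧ ∀ j, 1 ≤ j → (m : ℤ) ∣ Cs j → a ≤ j

/-- The `C`-orial: `0!_C = 1`, `n!_C = Cs 1 * Cs 2 * ⋯ * Cs n`. -/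
def Corial (Cs : ℕ → ℤ) : ℕ → ℤ
  | 0 => 1
  | n + 1 => Corial Cs n * Cs (n + 1)

/-- `p` is an ideal prime for `Cs`, with `α k` the rank of apparition of `p ^ k`
and parameter `s = s(p)`. -/
def IdealPrime (Cs : ℕ → ℤ) (p : ℕ) (α : ℕ → ℕ) (s : ℕ) : Prop :=
  1 ≤ s ∧ (∀ k, 1 ≤ k → IsRank Cs (p ^ k) (α k)) ∧
  (∀ k, 1 ≤ k → k ≤ s → α k = α 1) ∧
  (∀ k, s < k → α k = p ^ (k - s) * α 1)

/-- The `p`-adic valuation of the `C`-nomial coefficient `binom(n, m)_C`,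
defined as `ν_p(n!_C) - ν_p(m!_C) - ν_p((n-m)!_C)` (an integer). -/
def nuCnomial (p : ℕ) (Cs : ℕ → ℤ) (n m : ℕ) : ℤ :=
  (padicValInt p (Corial Cs n) : ℤ) - (padicValInt p (Corial Cs m) : ℤ)
    - (padicValInt p (Corial Cs (n - m)) : ℤ)

/-- `T_{p,C}(n, x) = ∑_{m=0}^{n} x ^ ν_p(binom(n,m)_C)`, a polynomial in `ℤ[x]`. -/
noncomputable def Tpoly (p : ℕ) (Cs : ℕ → ℤ) (n : ℕ) : Polynomial ℤ :=
  ∑ m ∈ Finset.range (n + 1), Polynomial.X ^ (nuCnomial p Cs n m).toNat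

theorem aux_dvd (Cs : ℕ → ℤ) (m a : ℕ) (hC : IsStrongDivSeq Cs) (h : IsRank Cs m a)
    (n : ℕ) (hn : 1 ≤ n) : (m : ℤ) ∣ Cs n ↔ a ∣ n := by
  obtain ⟨h1, h2, h3⟩ := h
  have hg := hC.2 a n h1 hn
  constructor
  · intro hd
    have h4 : (m : ℤ) ∣ Cs (Nat.gcd n a) := by
      rw [← Int.dvd_natAbs, ← hg]
      exact Int.dvd_coe_gcd hd h2
    have h5 := h3 _ (Nat.gcd_pos_of_pos_left _ hn) h4
    have h6 : Nat.gcd n a = a := le_antisymm (Nat.gcd_le_right _ h1) h5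
    rw [← h6]; exact Nat.gcd_dvd_left _ _
  · intro hd
    rw [Nat.gcd_eq_right hd] at hg
    have h4 : (Int.gcd (Cs n) (Cs a) : ℤ) ∣ Cs n := Int.gcd_dvd_left ..
    rw [hg] at h4
    exact h2.trans (Int.natAbs_dvd.mp h4 |> fun h => h)

theorem aux_val (Cs : ℕ → ℤ) (p : ℕ) (hp : p.Prime) (α : ℕ → ℕ) (s : ℕ)
    (hC : IsStrongDivSeq Cs) (hid : IdealPrime Cs p α s) (n : ℕ) (hn : 1 ≤ n) :
    padicValInt p (Cs n) = if α 1 ∣ n then s + padicValNat p (n / α 1) else 0 := by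
  have := Fact.mk hp
  obtain ⟨hs, hr, h1, h2⟩ := hid
  have ha : 1 ≤ α 1 := (hr 1 le_rfl).1
  have key : ∀ k, k ≤ padicValInt p (Cs n) ↔ (k = 0 ∨ α k ∣ n) := by
    intro k
    rcases Nat.eq_zero_or_pos k with rfl | hk
    · simp
    · have h3 := aux_dvd Cs (p ^ k) (α k) hC (hr k hk) n hn
      rw [← h3]
      push_cast
      rw [padicValInt_dvd_iff]
      have := hC.1 n hn
      simp [this]
      omega
  apply eq_of_forall_le_iff
  intro k
  rw [key]
  rcases Nat.eq_zero_or_pos k with rfl | hk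
  · simp
  by_cases hks : k ≤ s
  · rw [h1 k hk hks]
    split_ifs with hd
    · simp [hd]; omega
    · simp [hd]
  · rw [h2 k (by omega)]
    split_ifs with hd
    · obtain ⟨q, rfl⟩ := hd
      rw [Nat.mul_div_cancel_left _ ha, mul_comm (p ^ _), Nat.mul_dvd_mul_iff_left ha,
        padicValNat_dvd_iff]
      have hq : q ≠ 0 := by rintro rfl; simp at hn
      simp [hq]
      omega
    · have : ¬ p ^ (k - s) * α 1 ∣ n := fun h => hd ((Dvd.intro_left _ rfl).trans h)
      simp [this]

theorem aux_corial_ne (Cs : ℕ → ℤ) (hC : IsStrongDivSeq Cs) (n : ℕ) : Corial Cs n ≠ 0 := by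
  induction n with
  | zero => simp [Corial]
  | succ n ih => exact mul_ne_zero ih (hC.1 _ (by omega))

theorem aux_corial (Cs : ℕ → ℤ) (p : ℕ) (hp : p.Prime) (α : ℕ → ℕ) (s : ℕ)
    (hC : IsStrongDivSeq Cs) (hid : IdealPrime Cs p α s) (n : ℕ) :
    padicValInt p (Corial Cs n) = s * (n / α 1) + padicValNat p (n / α 1).factorial := by
  have := Fact.mk hp
  induction n with
  | zero => simp [Corial]
  | succ n ih =>
    rw [Corial, padicValInt.mul (aux_corial_ne Cs hC n) (hC.1 _ (by omega)), ih,
      aux_val Cs p hp α s hC hid _ (by omega), Nat.succ_div]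
    split_ifs with hd
    · rw [Nat.factorial_succ, padicValNat.mul (Nat.succ_ne_zero _) (Nat.factorial_ne_zero _)]
      ring
    · simp

/-- `ν_p(n!)`. -/
def vf (p n : ℕ) : ℕ := padicValNat p n.factorial

theorem vf_super (p : ℕ) (hp : p.Prime) (m k : ℕ) : vf p m + vf p k ≤ vf p (m + k) := by
  have := Fact.mk hp
  unfold vf
  rw [← padicValNat.mul (Nat.factorial_ne_zero _) (Nat.factorial_ne_zero _)]
  rw [← padicValNat_dvd_iff_le (Nat.factorial_ne_zero _)]
  exact pow_padicValNat_dvd.trans (Nat.factorial_mul_factorial_dvd_factorial_add m k)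

theorem vf_div (p : ℕ) (hp : p.Prime) (n : ℕ) : vf p n = n / p + vf p (n / p) := by
  have := Fact.mk hp
  unfold vf
  conv_lhs => rw [← Nat.div_add_mod n p]
  rw [padicValNat_factorial_mul_add _ (Nat.mod_lt _ hp.pos), padicValNat_factorial_mul, add_comm]

theorem aux_sum {R : Type*} [CommRing R] (b N r : ℕ) (hb : 1 ≤ b) (hr : r ≤ b)
    (ψ : ℕ → ℕ → R) :
    ∑ m ∈ range (b * N + r), ψ (m / b) ((b * N + r - 1 - m) / b)
      = (r : R) * ∑ M ∈ range (N + 1), ψ M (N - M)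
        + ((b - r : ℕ) : R) * ∑ M ∈ range N, ψ M (N - 1 - M) := by
  have hblock : ∀ (g : ℕ → R) (K : ℕ), ∑ m ∈ range (b * K), g m
      = ∑ M ∈ range K, ∑ t ∈ range b, g (b * M + t) := by
    intro g K
    induction K with
    | zero => simp
    | succ K ih => rw [Nat.mul_succ, sum_range_add, ih, sum_range_succ]
  have hdiv : ∀ M t, t < b → (b * M + t) / b = M := by
    intro M t ht
    rw [Nat.mul_add_div (by omega), Nat.div_eq_of_lt ht, add_zero]
  have hlow : ∀ M t, M ≤ N → t < r → (b * N + r - 1 - (b * M + t)) / b = N - M := by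
    intro M t hM ht
    obtain ⟨K, rfl⟩ := Nat.exists_eq_add_of_le hM
    rw [show b * (M + K) + r - 1 - (b * M + t) = b * K + (r - 1 - t) by
      rw [mul_add]; omega, hdiv _ _ (by omega)]
    omega
  have hhigh : ∀ M t, M < N → t < b - r →
      (b * N + r - 1 - (b * M + (r + t))) / b = N - 1 - M := by
    intro M t hM ht
    obtain ⟨K, rfl⟩ := Nat.exists_eq_add_of_lt hM
    rw [show b * (M + K + 1) + r - 1 - (b * M + (r + t)) = b * K + (b - 1 - t) by
      rw [mul_add, mul_add]; omega, hdiv _ _ (by omega)]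
    omega
  rw [sum_range_add, hblock]
  have hin : ∀ M ∈ range N, ∑ t ∈ range b,
      ψ ((b * M + t) / b) ((b * N + r - 1 - (b * M + t)) / b)
      = (r : R) * ψ M (N - M) + ((b - r : ℕ) : R) * ψ M (N - 1 - M) := by
    intro M hM
    have hM := mem_range.mp hM
    conv_lhs => rw [show b = r + (b - r) by omega]
    rw [sum_range_add, ← show b = r + (b - r) by omega]
    congr 1
    · rw [sum_congr rfl (g := fun _ => ψ M (N - M))]
      · simp
      · intro t ht
        have ht := mem_range.mp ht
        rw [hdiv _ _ (by omega), hlow _ _ hM.le ht]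
    · rw [sum_congr rfl (g := fun _ => ψ M (N - 1 - M))]
      · simp
      · intro t ht
        have ht := mem_range.mp ht
        rw [hdiv _ _ (by omega), hhigh _ _ hM ht]
  rw [sum_congr rfl hin, sum_add_distrib, ← mul_sum, ← mul_sum, sum_range_succ]
  rw [sum_congr rfl (g := fun _ => ψ N (N - N)) (s₁ := range r)]
  · simp; ring
  · intro t ht
    have ht := mem_range.mp ht
    rw [hdiv _ _ (by omega), hlow _ _ le_rfl ht]

open Polynomial in
/-- `∑_{M ≤ N} X ^ ν_p(binom(N, M))`. -/
noncomputable def FF (p N : ℕ) : ℤ[X] :=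
  ∑ M ∈ range (N + 1), X ^ (vf p N - vf p M - vf p (N - M))

open Polynomial in
/-- `∑_{M < N} X ^ (ν_p(N!) - ν_p(M!) - ν_p((N-1-M)!))`. -/
noncomputable def GG (p N : ℕ) : ℤ[X] :=
  ∑ M ∈ range N, X ^ (vf p N - vf p M - vf p (N - 1 - M))

open Polynomial in
/-- General splitting, where `T = c * N + ν_p(N!)`. -/
theorem aux_split (p : ℕ) (hp : p.Prime) (b c N r : ℕ) (hb : 1 ≤ b) (hr : r ≤ b) :
    ∑ m ∈ range (b * N + r), (X : ℤ[X]) ^ ((c * N + vf p N) - (c * (m / b) + vf p (m / b))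
        - (c * ((b * N + r - 1 - m) / b) + vf p ((b * N + r - 1 - m) / b)))
      = (r : ℤ[X]) * FF p N + ((b - r : ℕ) : ℤ[X]) * X ^ c * GG p N := by
  rw [aux_sum b N r hb hr (fun u w => (X : ℤ[X]) ^ ((c * N + vf p N) - (c * u + vf p u)
        - (c * w + vf p w)))]
  congr 1
  · congr 1
    apply sum_congr rfl
    intro M hM
    have hM := mem_range.mp hM
    obtain ⟨K, rfl⟩ := Nat.exists_eq_add_of_le (show M ≤ N by omega)
    congr 1
    rw [Nat.add_sub_cancel_left, mul_add]
    omega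
  · rw [mul_assoc]
    congr 1
    rw [GG, mul_sum]
    apply sum_congr rfl
    intro M hM
    have hM := mem_range.mp hM
    obtain ⟨K, rfl⟩ := Nat.exists_eq_add_of_lt hM
    rw [← pow_add]
    congr 1
    have h1 := vf_super p hp M K
    have h2 := vf_super p hp (M + K) 1
    rw [show M + K + 1 - 1 - M = K by omega, mul_add, mul_add]
    omega

theorem FF_rec (p : ℕ) (hp : p.Prime) (N j : ℕ) (hj : j < p) :
    FF p (p * N + j) = ((j + 1 : ℕ) : Polynomial ℤ) * FF p N
      + ((p - (j + 1) : ℕ) : Polynomial ℤ) * Polynomial.X ^ 1 * GG p N := by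
  rw [← aux_split p hp p 1 N (j + 1) hp.pos hj, FF]
  apply sum_congr rfl
  intro m _
  have h : (p * N + j) / p = N := by
    rw [Nat.mul_add_div hp.pos, Nat.div_eq_of_lt hj, add_zero]
  rw [vf_div p hp (p * N + j), h, vf_div p hp m, vf_div p hp (p * N + j - m)]
  simp [← add_assoc]

theorem GG_rec (p : ℕ) (hp : p.Prime) (N j : ℕ) (hj : j < p) :
    GG p (p * N + j) = ((j : ℕ) : Polynomial ℤ) * FF p N
      + ((p - j : ℕ) : Polynomial ℤ) * Polynomial.X ^ 1 * GG p N := by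
  rw [← aux_split p hp p 1 N j hp.pos hj.le, GG]
  apply sum_congr rfl
  intro m _
  have h : (p * N + j) / p = N := by
    rw [Nat.mul_add_div hp.pos, Nat.div_eq_of_lt hj, add_zero]
  rw [vf_div p hp (p * N + j), h, vf_div p hp m, vf_div p hp (p * N + j - 1 - m)]
  simp

theorem Tpoly_eq (Cs : ℕ → ℤ) (p : ℕ) (hp : p.Prime) (α : ℕ → ℕ) (s : ℕ)
    (hC : IsStrongDivSeq Cs) (hid : IdealPrime Cs p α s)
    (r : ℕ) (hr : r < α 1) (N : ℕ) :
    Tpoly p Cs (α 1 * N + r) = ((r + 1 : ℕ) : Polynomial ℤ) * FF p N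
      + ((α 1 - (r + 1) : ℕ) : Polynomial ℤ) * Polynomial.X ^ s * GG p N := by
  rw [← aux_split p hp (α 1) s N (r + 1) (by omega) hr, Tpoly]
  apply sum_congr rfl
  intro m _
  have h : (α 1 * N + r) / α 1 = N := by
    rw [Nat.mul_add_div (by omega), Nat.div_eq_of_lt hr, add_zero]
  rw [nuCnomial, aux_corial Cs p hp α s hC hid, aux_corial Cs p hp α s hC hid,
    aux_corial Cs p hp α s hC hid, h]
  congr 1
  simp only [vf, ← add_assoc, Nat.add_sub_cancel]
  omega

theorem stmt19 (Cs : ℕ → ℤ) (p : ℕ) (hp : p.Prime) (α : ℕ → ℕ) (s : ℕ)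
    (hC : IsStrongDivSeq Cs) (hid : IdealPrime Cs p α s)
    (r : ℕ) (hr : r < α 1) :
    FiniteDimensional (RatFunc ℚ)
      (Submodule.span (RatFunc ℚ)
        { g : ℕ → RatFunc ℚ | ∃ e i : ℕ, i < p ^ e ∧
            g = fun n => algebraMap (Polynomial ℚ) (RatFunc ℚ)
              ((Tpoly p Cs (α 1 * (p ^ e * n + i) + r)).map
                (Int.castRingHom ℚ)) }) := by
  let φ : Polynomial ℤ →+* RatFunc ℚ :=
    (algebraMap (Polynomial ℚ) (RatFunc ℚ)).comp (Polynomial.mapRingHom (Int.castRingHom ℚ))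
  let f : ℕ → RatFunc ℚ := fun n => φ (FF p n)
  let g : ℕ → RatFunc ℚ := fun n => φ (GG p n)
  let W : Submodule (RatFunc ℚ) (ℕ → RatFunc ℚ) := Submodule.span (RatFunc ℚ) {f, g}
  have hW : FiniteDimensional (RatFunc ℚ) W :=
    FiniteDimensional.span_of_finite _ (Set.toFinite _)
  have hcomb : ∀ (u w : ℕ → RatFunc ℚ), u ∈ W → w ∈ W → ∀ c d : RatFunc ℚ,
      (fun n => c * u n + d * w n) ∈ W := fun u w hu hw c d =>
    W.add_mem (W.smul_mem c hu) (W.smul_mem d hw)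
  have hfg : ∀ e i, i < p ^ e → (fun n => f (p ^ e * n + i)) ∈ W ∧
      (fun n => g (p ^ e * n + i)) ∈ W := by
    intro e
    induction e with
    | zero =>
      intro i hi
      have : i = 0 := by simpa using hi
      subst this
      simp only [pow_zero, one_mul, add_zero]
      exact ⟨Submodule.subset_span (by simp), Submodule.subset_span (by simp)⟩
    | succ e ih =>
      intro i hi
      have hlt : i / p < p ^ e := by
        rw [Nat.div_lt_iff_lt_mul hp.pos, ← pow_succ]; exact hi
      obtain ⟨h1, h2⟩ := ih _ hlt
      have hn : ∀ n, p ^ (e + 1) * n + i = p * (p ^ e * n + i / p) + i % p := by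
        intro n
        conv_lhs => rw [← Nat.div_add_mod i p]
        ring
      have hm := Nat.mod_lt i hp.pos
      constructor
      · convert hcomb _ _ h1 h2 (φ ((i % p + 1 : ℕ) : Polynomial ℤ))
          (φ (((p - (i % p + 1) : ℕ) : Polynomial ℤ) * Polynomial.X ^ 1)) using 2 with n
        simp only [f, g]
        rw [hn, FF_rec p hp _ _ hm, map_add, map_mul, map_mul _ _ (GG p _)]
      · convert hcomb _ _ h1 h2 (φ ((i % p : ℕ) : Polynomial ℤ))
          (φ (((p - (i % p) : ℕ) : Polynomial ℤ) * Polynomial.X ^ 1)) using 2 with n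
        simp only [f, g]
        rw [hn, GG_rec p hp _ _ hm, map_add, map_mul, map_mul _ _ (GG p _)]
  refine Submodule.finiteDimensional_of_le (S₂ := W) (Submodule.span_le.mpr ?_)
  rintro _ ⟨e, i, hi, rfl⟩
  obtain ⟨h1, h2⟩ := hfg e i hi
  have h3 := hcomb _ _ h1 h2 (φ ((r + 1 : ℕ) : Polynomial ℤ))
    (φ (((α 1 - (r + 1) : ℕ) : Polynomial ℤ) * Polynomial.X ^ s))
  have h4 : (fun n => algebraMap (Polynomial ℚ) (RatFunc ℚ)
      ((Tpoly p Cs (α 1 * (p ^ e * n + i) + r)).map (Int.castRingHom ℚ)))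
      = fun n => φ ((r + 1 : ℕ) : Polynomial ℤ) * f (p ^ e * n + i)
        + φ (((α 1 - (r + 1) : ℕ) : Polynomial ℤ) * Polynomial.X ^ s) * g (p ^ e * n + i) := by
    funext n
    change φ (Tpoly p Cs (α 1 * (p ^ e * n + i) + r)) = _
    rw [Tpoly_eq Cs p hp α s hC hid r hr, map_add, map_mul, map_mul _ _ (GG p _)]
  rw [h4]
  exact h3
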